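/- arXiv:2209.08519 — 10 statements merged into one kernel-verified Lean document; each statement's English description precedes it below -/
import Mathlib

section
/- Let M be a right R-module with endomorphism ring S = End_R(M). If M is an abelian Rickart module (i.e., every kernel of an endomorphism of M is a direct summand of M and every idempotent of S is central in S), then M is a centrally endo-AIP module. -/
/-- A submodule `N` of `M` is *fully invariant* if it is stable under every
endomorphism of `M`. -/
def IsFullyInvariant {R M : Type*} [Ring R] [AddCommGroup M] [Module R M]
    (N : Submodule R M) : Prop :=
  ∀ φ : Module.End R M, ∀ n ∈ N, φ n ∈ N

/-- `M` is a *centrally endo-AIP* module: for every fully invariant submodule `N`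
of `M`, the left annihilator of `N` in `S = End_R(M)` is a centrally s-unital
ideal of `S`, i.e. every `φ` annihilating `N` satisfies `φ * ψ = φ` for some
central element `ψ` of `S` annihilating `N`. -/
def IsCentrallyEndoAIP (R M : Type*) [Ring R] [AddCommGroup M] [Module R M] : Prop :=
  ∀ N : Submodule R M, IsFullyInvariant N →
    ∀ φ : Module.End R M, (∀ n ∈ N, φ n = 0) →
      ∃ ψ : Module.End R M, (∀ n ∈ N, ψ n = 0) ∧
        (∀ g : Module.End R M, ψ * g = g * ψ) ∧ φ * ψ = φ

/-- `M` is an *endo-AIP* module: for every fully invariant submodule `N` of `M`,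
the left annihilator of `N` in `S = End_R(M)` is a right s-unital ideal of `S`. -/
def IsEndoAIP (R M : Type*) [Ring R] [AddCommGroup M] [Module R M] : Prop :=
  ∀ N : Submodule R M, IsFullyInvariant N →
    ∀ φ : Module.End R M, (∀ n ∈ N, φ n = 0) →
      ∃ ψ : Module.End R M, (∀ n ∈ N, ψ n = 0) ∧ φ * ψ = φ

/-- A ring `S` is a *(left) centrally AIP* ring: the left annihilator of every
two-sided ideal of `S` is a centrally s-unital ideal of `S`. -/
def IsCentrallyAIPRing (S : Type*) [Ring S] : Prop :=
  ∀ I : TwoSidedIdeal S, ∀ a : S, (∀ x ∈ I, a * x = 0) →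
    ∃ z : S, (∀ x ∈ I, z * x = 0) ∧ (∀ s : S, z * s = s * z) ∧ a * z = a

theorem exists_isIdempotentElem_ker_eq_of_isCompl {R M : Type*} [Ring R] [AddCommGroup M]
    [Module R M] {K K' : Submodule R M} (h : IsCompl K K') :
    ∃ e : Module.End R M, IsIdempotentElem e ∧ LinearMap.ker e = K :=
  ⟨K'.projection K h.symm, Submodule.isIdempotentElem_projection h.symm,
    Submodule.ker_projection h.symm⟩

theorem stmt_0_general {R M : Type*} [Ring R] [AddCommGroup M] [Module R M]
    (hRickart : ∀ φ : Module.End R M, ∃ N' : Submodule R M, IsCompl (LinearMap.ker φ) N')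
    (hAbelian : ∀ e : Module.End R M, e * e = e → ∀ g : Module.End R M, e * g = g * e)
    (N : Submodule R M) (φ : Module.End R M) (hφ : ∀ n ∈ N, φ n = 0) :
    ∃ ψ : Module.End R M, (∀ n ∈ N, ψ n = 0) ∧
      (∀ g : Module.End R M, ψ * g = g * ψ) ∧ φ * ψ = φ := by
  obtain ⟨K', hK'⟩ := hRickart φ
  obtain ⟨e, he, hker⟩ := exists_isIdempotentElem_ker_eq_of_isCompl hK'
  have he_annihilates : N ≤ LinearMap.ker e := hker ▸ hφ
  have hφe : φ * e = φ := (LinearMap.IsIdempotentElem.comp_eq_left_iff he φ).2 hker.le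
  exact ⟨e, he_annihilates, hAbelian e he, hφe⟩

/-- An abelian Rickart module is a centrally endo-AIP module. -/
theorem stmt_0 (R M : Type*) [Ring R] [AddCommGroup M] [Module R M]
    (hRickart : ∀ φ : Module.End R M, ∃ N' : Submodule R M, IsCompl (LinearMap.ker φ) N')
    (hAbelian : ∀ e : Module.End R M, e * e = e → ∀ g : Module.End R M, e * g = g * e) :
    IsCentrallyEndoAIP R M :=
  fun N _ φ hφ => stmt_0_general hRickart hAbelian N φ hφ
end

section
/- Let M be a right R-module with endomorphism ring S = End_R(M). If M is a reduced Rickart module, then M is a centrally endo-AIP module. -/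
/-!
In a reduced module the endomorphism ring `S` is reduced: if `φ ^ 2 = 0`, then `φ` kills `φ m`, so
`φ m` lies in `Im φ ∩ S (φ m) = 0`. In a reduced ring `a * b = 0` is equivalent to `b * a = 0`,
which forces idempotents to be central. If `Ker φ` is a direct summand, the projection `e` with
`Ker e = Ker φ` is therefore central, it satisfies `φ * e = φ`, and it annihilates everything
that `φ` does.
-/

theorem mul_eq_zero_comm_of_isReduced {M₀ : Type*} [MonoidWithZero M₀] [IsReduced M₀] {a b : M₀} :
    a * b = 0 ↔ b * a = 0 := by
  have swap {x y : M₀} (hxy : x * y = 0) : y * x = 0 := by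
    rw [← sq_eq_zero_iff]
    calc
      (y * x) ^ 2 = y * (x * y) * x := by simp only [sq, mul_assoc]
      _ = 0 := by rw [hxy, mul_zero, zero_mul]
  exact ⟨swap, swap⟩

theorem commute_of_isIdempotentElem {S : Type*} [Ring S] [IsReduced S] {e : S}
    (he : IsIdempotentElem e) (a : S) : Commute e a := by
  have h_left : e * (a * (1 - e)) = 0 := by
    rw [mul_eq_zero_comm_of_isReduced, mul_assoc, he.one_sub_mul_self, mul_zero]
  have h_right : (1 - e) * (a * e) = 0 := by
    rw [mul_eq_zero_comm_of_isReduced, mul_assoc, he.mul_one_sub_self, mul_zero]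
  calc
    e * a = e * (a * e) := by rwa [mul_one_sub, mul_sub, sub_eq_zero] at h_left
    _ = a * e := by rwa [one_sub_mul, sub_eq_zero, eq_comm] at h_right

/-- `M` is a *reduced module*: with `S = End_R(M)`, `φ m = 0` implies `Im φ ∩ S m = 0`. The
intersection is spelled out on elements. -/
def IsReducedModule (R M : Type*) [Semiring R] [AddCommMonoid M] [Module R M] : Prop :=
  ∀ (φ : Module.End R M) (m : M), φ m = 0 →
    ∀ x : M, (∃ y : M, φ y = x) → (∃ ψ : Module.End R M, ψ m = x) → x = 0

theorem IsReducedModule.isReduced_end {R M : Type*} [Semiring R] [AddCommMonoid M] [Module R M]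
    (hM : IsReducedModule R M) : IsReduced (Module.End R M) := by
  refine (isReduced_iff_pow_one_lt 2 one_lt_two).2 fun φ hφ ↦ LinearMap.ext fun m ↦ ?_
  have h_apply : φ (φ m) = 0 := by rw [← Module.End.mul_apply, ← sq, hφ, LinearMap.zero_apply]
  exact hM φ (φ m) h_apply (φ m) ⟨m, rfl⟩ ⟨1, rfl⟩

theorem stmt_2_general {R M : Type*} [Ring R] [AddCommGroup M] [Module R M]
    [IsReduced (Module.End R M)] {φ : Module.End R M} (hφ : IsComplemented (LinearMap.ker φ)) :
    ∃ e : Module.End R M, LinearMap.ker e = LinearMap.ker φ ∧ (∀ g, Commute e g) ∧ φ * e = φ := by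
  obtain ⟨K, hK⟩ := hφ
  have he := Submodule.isIdempotentElem_projection hK.symm
  have hker := Submodule.ker_projection hK.symm
  exact ⟨_, hker, commute_of_isIdempotentElem he,
    (LinearMap.IsIdempotentElem.comp_eq_left_iff he φ).2 hker.le⟩

/-- A reduced Rickart module is a centrally endo-AIP module. -/
theorem stmt_2 (R M : Type*) [Ring R] [AddCommGroup M] [Module R M]
    (hRickart : ∀ φ : Module.End R M, ∃ N' : Submodule R M, IsCompl (LinearMap.ker φ) N')
    (hReduced : ∀ (φ : Module.End R M) (m : M), φ m = 0 →
      ∀ x : M, (∃ y : M, φ y = x) → (∃ ψ : Module.End R M, ψ m = x) → x = 0) :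
    IsCentrallyEndoAIP R M := by
  have : IsReduced (Module.End R M) := IsReducedModule.isReduced_end hReduced
  intro N _ φ hN
  obtain ⟨e, hker, he⟩ := stmt_2_general (hRickart φ)
  exact ⟨e, fun n hn ↦ hker.ge (hN n hn), he⟩
end

section
/- Let M be a right R-module with endomorphism ring S = End_R(M). If M is a semicommutative Rickart module, then M is a centrally endo-AIP module. -/
/-!
If `ker φ` is a direct summand, it is the kernel of an idempotent endomorphism `e`, and `φ e = φ`.
Semicommutativity makes both `ker e` and `range e = ker (1 - e)` stable under every endomorphism,
so `e` is central; it annihilates every submodule that `φ` annihilates.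
-/

section

variable {R M : Type*} [Ring R] [AddCommGroup M] [Module R M]

variable (R M) in
/-- `M` is a *Rickart* module: the kernel of every endomorphism of `M` is a direct summand, i.e. has
a complement in the lattice of submodules. -/
def IsRickartModule : Prop :=
  ∀ φ : Module.End R M, IsComplemented (LinearMap.ker φ)

variable (R M) in
/-- `M` is a *semicommutative* module: `ψ m = 0` implies `ψ (S m) = 0` for `S = End_R(M)`.
Equivalently, all kernels of endomorphisms are fully invariant. -/
def IsSemicommutativeModule : Prop :=
  ∀ (ψ : Module.End R M) (m : M), ψ m = 0 → ∀ φ : Module.End R M, ψ (φ m) = 0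

theorem IsSemicommutativeModule.isFullyInvariant_ker (hM : IsSemicommutativeModule R M)
    (ψ : Module.End R M) : IsFullyInvariant (LinearMap.ker ψ) :=
  fun φ m hm => hM ψ m hm φ

theorem IsSemicommutativeModule.commute_of_isIdempotentElem (hM : IsSemicommutativeModule R M)
    {e : Module.End R M} (he : IsIdempotentElem e) (g : Module.End R M) : Commute e g := by
  have ker_invariant : LinearMap.ker e ∈ g.invtSubmodule := hM.isFullyInvariant_ker e g
  have range_invariant : LinearMap.range e ∈ g.invtSubmodule := by
    rw [LinearMap.IsIdempotentElem.range_eq_ker_one_sub he]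
    exact hM.isFullyInvariant_ker (1 - e) g
  exact (LinearMap.IsIdempotentElem.commute_iff he).2 ⟨range_invariant, ker_invariant⟩

theorem exists_isIdempotentElem_ker_eq_of_isComplemented {p : Submodule R M}
    (hp : IsComplemented p) :
    ∃ e : Module.End R M, IsIdempotentElem e ∧ LinearMap.ker e = p := by
  obtain ⟨q, hpq⟩ := hp
  exact ⟨q.projection p hpq.symm, Submodule.isIdempotentElem_projection hpq.symm,
    Submodule.ker_projection hpq.symm⟩

theorem IsRickartModule.exists_central_isIdempotentElem_ker_eq (hR : IsRickartModule R M)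
    (hS : IsSemicommutativeModule R M) (φ : Module.End R M) :
    ∃ e : Module.End R M, IsIdempotentElem e ∧ (∀ g, Commute e g) ∧
      LinearMap.ker e = LinearMap.ker φ := by
  obtain ⟨e, he, hker⟩ := exists_isIdempotentElem_ker_eq_of_isComplemented (hR φ)
  exact ⟨e, he, hS.commute_of_isIdempotentElem he, hker⟩

end

/-- A semicommutative Rickart module is a centrally endo-AIP module. -/
theorem stmt_3 (R M : Type*) [Ring R] [AddCommGroup M] [Module R M]
    (hRickart : ∀ φ : Module.End R M, ∃ N' : Submodule R M, IsCompl (LinearMap.ker φ) N')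
    (hSemicomm : ∀ (ψ : Module.End R M) (m : M), ψ m = 0 →
      ∀ φ : Module.End R M, ψ (φ m) = 0) :
    IsCentrallyEndoAIP R M := by
  intro N _ φ hφ
  obtain ⟨e, he, hcentral, hker⟩ :=
    IsRickartModule.exists_central_isIdempotentElem_ker_eq hRickart hSemicomm φ
  have N_le_ker : N ≤ LinearMap.ker e := hker ▸ hφ
  have mul_eq : φ * e = φ := (LinearMap.IsIdempotentElem.comp_eq_left_iff he φ).2 hker.le
  exact ⟨e, N_le_ker, hcentral, mul_eq⟩
end

section
/- Let M be a right R-module with endomorphism ring S = End_R(M) which has the insertion of factor property (IFP), i.e., for every ψ ∈ S the kernel Ker(ψ) is a fully invariant submodule of M. Then M is a centrally endo-AIP module if and only if M is an endo-AIP module. -/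
/-!
If `φ * ψ = φ`, then `φ` kills the range of `1 - ψ`; if moreover `ψ` kills `ker φ`, then
`ψ * (1 - ψ) = 0`. Applying the endo-AIP condition to the fully invariant submodule `ker φ`
therefore produces an idempotent `ψ`. Since `ker ψ` and `range ψ = ker (1 - ψ)` are fully invariant,
every endomorphism preserves both summands of `M = range ψ ⊕ ker ψ`, that is, commutes with `ψ`.
-/

theorem isIdempotentElem_of_comp_eq_of_ker_le_ker {R M P : Type*} [Ring R]
    [AddCommGroup M] [Module R M] [AddCommGroup P] [Module R P]
    {φ : M →ₗ[R] P} {ψ : Module.End R M} (hcomp : φ ∘ₗ ψ = φ)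
    (hker : LinearMap.ker φ ≤ LinearMap.ker ψ) : IsIdempotentElem ψ := by
  ext m
  have hmem : ψ m - m ∈ LinearMap.ker φ :=
    LinearMap.sub_mem_ker_iff.mpr (LinearMap.congr_fun hcomp m)
  exact LinearMap.sub_mem_ker_iff.mp (hker hmem)

section EndoAIP

variable {R M : Type*} [Ring R] [AddCommGroup M] [Module R M]

theorem forall_commute_iff_isFullyInvariant {e : Module.End R M} (he : IsIdempotentElem e) :
    (∀ g, Commute e g) ↔
      IsFullyInvariant (LinearMap.range e) ∧ IsFullyInvariant (LinearMap.ker e) :=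
  (forall_congr' fun _ ↦ LinearMap.IsIdempotentElem.commute_iff he).trans forall_and

theorem forall_commute_of_isFullyInvariant_ker
    (hIFP : ∀ f : Module.End R M, IsIdempotentElem f → IsFullyInvariant (LinearMap.ker f))
    {e : Module.End R M} (he : IsIdempotentElem e) (g : Module.End R M) : Commute e g := by
  have hrange : IsFullyInvariant (LinearMap.range e) := by
    rw [LinearMap.IsIdempotentElem.range_eq_ker_one_sub he]
    exact hIFP (1 - e) he.one_sub
  exact (forall_commute_iff_isFullyInvariant he).mpr ⟨hrange, hIFP e he⟩ g

theorem IsCentrallyEndoAIP.isEndoAIP (h : IsCentrallyEndoAIP R M) : IsEndoAIP R M := by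
  intro N hN φ hφ
  obtain ⟨ψ, hψN, -, hφψ⟩ := h N hN φ hφ
  exact ⟨ψ, hψN, hφψ⟩

theorem IsEndoAIP.exists_isIdempotentElem_mul_eq (h : IsEndoAIP R M) {φ : Module.End R M}
    (hφ : IsFullyInvariant (LinearMap.ker φ)) :
    ∃ e : Module.End R M,
      IsIdempotentElem e ∧ LinearMap.ker φ ≤ LinearMap.ker e ∧ φ * e = φ := by
  obtain ⟨e, hker, hmul⟩ := h (LinearMap.ker φ) hφ φ fun _ ↦ id
  exact ⟨e, isIdempotentElem_of_comp_eq_of_ker_le_ker hmul hker, hker, hmul⟩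

end EndoAIP

/-- For a module with the insertion of factor property (every kernel of an
endomorphism is fully invariant), centrally endo-AIP is equivalent to endo-AIP. -/
theorem stmt_4 (R M : Type*) [Ring R] [AddCommGroup M] [Module R M]
    (hIFP : ∀ ψ : Module.End R M, IsFullyInvariant (LinearMap.ker ψ)) :
    IsCentrallyEndoAIP R M ↔ IsEndoAIP R M := by
  refine ⟨IsCentrallyEndoAIP.isEndoAIP, fun h N _ φ hφN ↦ ?_⟩
  obtain ⟨e, he, hker, hmul⟩ := h.exists_isIdempotentElem_mul_eq (hIFP φ)
  have hcentral (g : Module.End R M) : e * g = g * e :=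
    forall_commute_of_isFullyInvariant_ker (fun f _ ↦ hIFP f) he g
  exact ⟨e, fun n hn ↦ hker (hφN n hn), hcentral, hmul⟩
end

section
/- Every direct summand of a centrally endo-AIP module is a centrally endo-AIP module. That is, if M is a centrally endo-AIP right R-module and N is a direct summand of M, then N is a centrally endo-AIP module. -/
/-!
Let `ι : P → M` and `π : M → P` satisfy `π ∘ ι = id`. For a fully invariant submodule `L` of `P`,
the largest fully invariant submodule `K` of `M` inside `π⁻¹(L)` contains `ι(L)`. If `φ`
annihilates `L`, then `ι ∘ φ ∘ π` annihilates `K`; a central right unit `ψ` for it that annihilates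
`K` compresses to `π ∘ ψ ∘ ι`, which annihilates `L`, is central in `End P`, and is a right unit
for `φ`.
-/

section FullyInvariantCore

variable {R M P : Type*} [Ring R] [AddCommGroup M] [Module R M] [AddCommGroup P] [Module R P]

/-- The largest fully invariant submodule of `M` contained in `N`, encoded as the set of elements
all of whose images under endomorphisms of `M` lie in `N`. -/
def fullyInvariantCore (N : Submodule R M) : Submodule R M :=
  ⨅ f : Module.End R M, N.comap f

theorem mem_fullyInvariantCore {N : Submodule R M} {m : M} :
    m ∈ fullyInvariantCore N ↔ ∀ f : Module.End R M, f m ∈ N := by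
  simp only [fullyInvariantCore, Submodule.mem_iInf, Submodule.mem_comap]

theorem fullyInvariantCore_le (N : Submodule R M) : fullyInvariantCore N ≤ N :=
  fun _ hm => mem_fullyInvariantCore.1 hm 1

theorem isFullyInvariant_fullyInvariantCore (N : Submodule R M) :
    IsFullyInvariant (fullyInvariantCore N) :=
  fun g _ hm => mem_fullyInvariantCore.2 fun f => mem_fullyInvariantCore.1 hm (f * g)

theorem IsFullyInvariant.map_le_fullyInvariantCore_comap {L : Submodule R P}
    (hL : IsFullyInvariant L) (ι : P →ₗ[R] M) (π : M →ₗ[R] P) :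
    L.map ι ≤ fullyInvariantCore (L.comap π) :=
  Submodule.map_le_iff_le_comap.2 fun x hx =>
    mem_fullyInvariantCore.2 fun f => hL (π ∘ₗ f ∘ₗ ι) x hx

end FullyInvariantCore

theorem commute_comp_comp_of_leftInverse {R M P : Type*} [Semiring R] [AddCommMonoid M]
    [Module R M] [AddCommMonoid P] [Module R P] {ι : P →ₗ[R] M} {π : M →ₗ[R] P}
    (hπι : Function.LeftInverse π ι) {ψ : Module.End R M} {g : Module.End R P}
    (hψ : Commute ψ (ι ∘ₗ g ∘ₗ π)) : Commute (π ∘ₗ ψ ∘ₗ ι : Module.End R P) g :=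
  LinearMap.ext fun x =>
    calc
      π (ψ (ι (g x))) = π (ψ (ι (g (π (ι x))))) := by rw [hπι x]
      _ = π (ι (g (π (ψ (ι x))))) := congrArg π (LinearMap.congr_fun hψ.eq (ι x))
      _ = g (π (ψ (ι x))) := hπι _

theorem IsCentrallyEndoAIP.of_leftInverse {R M P : Type*} [Ring R] [AddCommGroup M] [Module R M]
    [AddCommGroup P] [Module R P] (hM : IsCentrallyEndoAIP R M) {ι : P →ₗ[R] M} {π : M →ₗ[R] P}
    (hπι : Function.LeftInverse π ι) : IsCentrallyEndoAIP R P := by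
  intro L hL φ hφL
  have annihilates_core : ∀ m ∈ fullyInvariantCore (L.comap π), (ι ∘ₗ φ ∘ₗ π) m = 0 := by
    intro m hm
    have hπm : π m ∈ L := fullyInvariantCore_le (L.comap π) hm
    simp [hφL _ hπm]
  obtain ⟨ψ, hψ_core, hψ_central, hφψ⟩ :=
    hM _ (isFullyInvariant_fullyInvariantCore _) _ annihilates_core
  refine ⟨π ∘ₗ ψ ∘ₗ ι, fun x hx => ?_,
    fun g => commute_comp_comp_of_leftInverse hπι (hψ_central (ι ∘ₗ g ∘ₗ π)), ?_⟩
  · have hιx : ι x ∈ fullyInvariantCore (L.comap π) :=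
      hL.map_le_fullyInvariantCore_comap ι π (Submodule.mem_map_of_mem hx)
    simp [hψ_core _ hιx]
  · ext x
    calc
      φ (π (ψ (ι x))) = π (ι (φ (π (ψ (ι x))))) := (hπι _).symm
      _ = π (ι (φ (π (ι x)))) := congrArg π (LinearMap.congr_fun hφψ (ι x))
      _ = φ x := by rw [hπι, hπι]

/-- Every direct summand of a centrally endo-AIP module is centrally endo-AIP. -/
theorem stmt_5 (R M : Type*) [Ring R] [AddCommGroup M] [Module R M]
    (hM : IsCentrallyEndoAIP R M) (N N' : Submodule R M) (hcompl : IsCompl N N') :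
    IsCentrallyEndoAIP R N :=
  hM.of_leftInverse (ι := N.subtype) (π := N.projectionOnto N' hcompl)
    (Submodule.projectionOnto_apply_left hcompl)
end

section
/- Let M be a centrally endo-AIP right R-module and let N be a fully invariant submodule of M such that every endomorphism ψ of N extends to an endomorphism of M (i.e., for each ψ ∈ End_R(N) there exists φ ∈ End_R(M) whose restriction to N equals ψ). Then N is a centrally endo-AIP module. -/
/-!
Since `N` is fully invariant, restriction is a ring homomorphism `End R M →+* End R N`, and the
extension hypothesis makes it surjective, so it sends central elements to central elements. A fully
invariant submodule `K` of `N` is also fully invariant in `M`, and an endomorphism of `M`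
annihilates `K` exactly when its restriction to `N` does. A central unit for a lift of `φ` in the
annihilator of `K` in `End R M` therefore restricts to one for `φ` in `End R N`.
-/

namespace IsFullyInvariant

variable {R M : Type*} [Ring R] [AddCommGroup M] [Module R M] {N : Submodule R M}

/-- The ring homomorphism restricting endomorphisms of `M` to a fully invariant submodule `N`,
through which elements of `End R M` and their products are compared with those of `End R N`. -/
def endRestrict (hN : IsFullyInvariant N) : Module.End R M →+* Module.End R N where
  toFun φ := φ.restrict (hN φ)
  map_one' := rfl
  map_mul' _ _ := rfl
  map_zero' := rfl
  map_add' _ _ := rfl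

@[simp]
theorem coe_endRestrict_apply (hN : IsFullyInvariant N) (φ : Module.End R M) (n : N) :
    (hN.endRestrict φ n : M) = φ n :=
  rfl

theorem endRestrict_surjective (hN : IsFullyInvariant N)
    (hext : ∀ ψ : Module.End R N, ∃ φ : Module.End R M, ∀ n : N, φ (n : M) = (ψ n : M)) :
    Function.Surjective hN.endRestrict := fun ψ =>
  (hext ψ).imp fun _ hφ => LinearMap.ext fun n => Subtype.ext (hφ n)

theorem map_subtype (hN : IsFullyInvariant N) {K : Submodule R N} (hK : IsFullyInvariant K) :
    IsFullyInvariant (K.map N.subtype) := by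
  rintro φ _ ⟨k, hk, rfl⟩
  exact ⟨hN.endRestrict φ k, hK _ k hk, rfl⟩

theorem forall_mem_endRestrict_eq_zero_iff (hN : IsFullyInvariant N) (K : Submodule R N)
    (φ : Module.End R M) :
    (∀ k ∈ K, hN.endRestrict φ k = 0) ↔ ∀ m ∈ K.map N.subtype, φ m = 0 := by
  simp only [Submodule.mem_map, forall_exists_index, and_imp, forall_apply_eq_imp_iff₂,
    Submodule.subtype_apply, ← coe_endRestrict_apply hN, ZeroMemClass.coe_eq_zero]

end IsFullyInvariant

/-- A fully invariant submodule of a centrally endo-AIP module, each of whose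
endomorphisms extends to an endomorphism of the ambient module, is centrally endo-AIP. -/
theorem stmt_6 (R M : Type*) [Ring R] [AddCommGroup M] [Module R M]
    (hM : IsCentrallyEndoAIP R M) (N : Submodule R M) (hN : IsFullyInvariant N)
    (hext : ∀ ψ : Module.End R N, ∃ φ : Module.End R M, ∀ n : N, φ (n : M) = (ψ n : M)) :
    IsCentrallyEndoAIP R N := by
  intro K hK φ hφ
  have hsurj := hN.endRestrict_surjective hext
  obtain ⟨φ, rfl⟩ := hsurj φ
  rw [hN.forall_mem_endRestrict_eq_zero_iff] at hφ
  obtain ⟨ψ, hψ, hcentral, hunit⟩ := hM _ (hN.map_subtype hK) φ hφ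
  refine ⟨hN.endRestrict ψ, (hN.forall_mem_endRestrict_eq_zero_iff K ψ).2 hψ, ?_, ?_⟩
  · exact hsurj.forall.2 fun g => Commute.map (hcentral g) hN.endRestrict
  · rw [← map_mul, hunit]
end

section
/- Every finitely generated centrally endo-AIP ℤ-module M is torsion-free or semisimple. -/
/-!
The idea is that a nonzero homomorphism `M ⧸ N → N`, for `N` fully invariant, would be an
endomorphism `φ` of `M` mapping `M` into `N` and killing `N`. The AIP condition gives a central
`ψ` killing `N` with `φ = φ ψ = ψ φ`, and `ψ φ = 0`; hence `Hom(M ⧸ N, N) = 0`.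

For `N` the `r`-torsion of `M`, multiplication by `r` is such a `φ` as soon as `r ^ 2 M = 0`. So the
annihilator of `M` is a radical ideal, and `M` is semisimple if `R ⧸ Ann M` is Artinian. This covers
finitely generated torsion modules over a Noetherian ring of dimension at most one.

For `N` the torsion submodule over a Noetherian domain, `Hom(M ⧸ N, N) = 0` yields an `r` which
annihilates `M ⧸ N` and is regular on `N`: then `N = 0` if `r = 0`, and `N = M` otherwise.
-/

open Module
open Submodule hiding IsFullyInvariant

theorem isFullyInvariant_torsionBy {R M : Type*} [CommRing R] [AddCommGroup M] [Module R M]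
    (r : R) : IsFullyInvariant (torsionBy R M r) := fun φ n hn ↦ by
  rw [mem_torsionBy_iff] at hn ⊢
  rw [← map_smul, hn, map_zero]

theorem isFullyInvariant_torsion {R M : Type*} [CommRing R] [AddCommGroup M] [Module R M] :
    IsFullyInvariant (torsion R M) := fun φ _ ⟨a, ha⟩ ↦
  ⟨a, by rw [← LinearMap.map_smul_of_tower, ha, map_zero]⟩

theorem isArtinianRing_quotient_annihilator_of_isTorsion {R M : Type*} [CommRing R]
    [IsNoetherianRing R] [Ring.KrullDimLE 1 R] [AddCommGroup M] [Module R M] [Module.Finite R M]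
    (hM : IsTorsion R M) : IsArtinianRing (R ⧸ annihilator R M) := by
  obtain ⟨a, ha, ha_reg⟩ := annihilator_top_inter_nonZeroDivisors hM
  rw [annihilator_top, SetLike.mem_coe, ← Ideal.span_singleton_le_iff_mem] at ha
  have : IsArtinian R (R ⧸ Ideal.span {a}) :=
    (isFiniteLength_iff_isNoetherian_isArtinian.mp
      (isFiniteLength_quotient_span_singleton R ha_reg)).2
  have : IsArtinian R (R ⧸ annihilator R M) :=
    isArtinian_of_surjective _ (factor ha) (factor_surjective ha)
  exact isArtinian_of_tower R this

namespace IsCentrallyEndoAIP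

section Ring

variable {R M : Type*} [Ring R] [AddCommGroup M] [Module R M] {N : Submodule R M}

theorem eq_zero_of_range_le_of_le_ker (h : IsCentrallyEndoAIP R M) (hN : IsFullyInvariant N)
    {φ : End R M} (hrange : LinearMap.range φ ≤ N) (hker : N ≤ LinearMap.ker φ) : φ = 0 := by
  obtain ⟨ψ, hψN, hψ_central, hφψ⟩ := h N hN φ hker
  calc
    φ = ψ * φ := by rw [hψ_central, hφψ]
    _ = 0 := LinearMap.ext fun x ↦ hψN _ (hrange ⟨x, rfl⟩)

theorem subsingleton_quotient_linearMap (h : IsCentrallyEndoAIP R M) (hN : IsFullyInvariant N) :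
    Subsingleton ((M ⧸ N) →ₗ[R] N) := by
  refine subsingleton_of_forall_eq 0 fun f ↦ ?_
  have hzero : N.subtype ∘ₗ f ∘ₗ N.mkQ = 0 :=
    h.eq_zero_of_range_le_of_le_ker hN (by rintro _ ⟨x, rfl⟩; exact (f _).2)
      fun n hn ↦ by simp [(Quotient.mk_eq_zero N).mpr hn]
  ext x
  exact LinearMap.congr_fun hzero x

end Ring

section CommRing

variable {R M : Type*} [CommRing R] [AddCommGroup M] [Module R M]

theorem isRadical_annihilator (h : IsCentrallyEndoAIP R M) : (annihilator R M).IsRadical := by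
  refine (Ideal.isRadical_iff_pow_one_lt 2 one_lt_two).mpr fun r hr ↦ ?_
  have hsq (x : M) : r • r • x = 0 := by
    rw [← mul_smul, ← sq, mem_annihilator.mp hr]
  have hzero : LinearMap.lsmul R M r = 0 :=
    h.eq_zero_of_range_le_of_le_ker (isFullyInvariant_torsionBy r)
      (by rintro _ ⟨x, rfl⟩; exact hsq x) le_rfl
  exact mem_annihilator.mpr fun x ↦ LinearMap.congr_fun hzero x

theorem isSemisimpleModule_of_isArtinianRing_quotient_annihilator (h : IsCentrallyEndoAIP R M)
    [IsArtinianRing (R ⧸ annihilator R M)] : IsSemisimpleModule R M := by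
  have : IsReduced (R ⧸ annihilator R M) :=
    (Ideal.isRadical_iff_quotient_reduced _).mp h.isRadical_annihilator
  have : IsSemisimpleRing (R ⧸ annihilator R M) := IsArtinianRing.isSemisimpleRing_of_isReduced _
  have hM : IsTorsionBySet R M (annihilator R M) := isTorsionBySet_annihilator R M
  let := hM.module
  exact hM.isSemisimpleModule_iff.mp inferInstance

theorem exists_mem_annihilator_quotient_and_isSMulRegular [IsNoetherianRing R] [Module.Finite R M]
    (h : IsCentrallyEndoAIP R M) {N : Submodule R M} (hN : IsFullyInvariant N) :
    ∃ r ∈ annihilator R (M ⧸ N), IsSMulRegular N r :=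
  IsSMulRegular.subsingleton_linearMap_iff.mp (h.subsingleton_quotient_linearMap hN)

theorem torsion_eq_bot_or_isTorsion [IsDomain R] [IsNoetherianRing R] [Module.Finite R M]
    (h : IsCentrallyEndoAIP R M) : torsion R M = ⊥ ∨ IsTorsion R M := by
  obtain ⟨r, hr_ann, hr_reg⟩ :=
    h.exists_mem_annihilator_quotient_and_isSMulRegular isFullyInvariant_torsion
  by_cases hr : r = 0
  · left
    subst hr
    exact subsingleton_iff_eq_bot.mp (IsSMulRegular.zero_iff_subsingleton.mp hr_reg)
  · right
    intro x
    have hrx : r • x ∈ torsion R M :=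
      (Quotient.mk_eq_zero _).mp (mem_annihilator.mp hr_ann (Submodule.Quotient.mk x))
    obtain ⟨a, ha⟩ := hrx
    exact ⟨a * ⟨r, mem_nonZeroDivisors_of_ne_zero hr⟩, by rw [mul_smul]; exact ha⟩

end CommRing

end IsCentrallyEndoAIP

theorem stmt_7_general {R M : Type*} [CommRing R] [IsDomain R] [IsNoetherianRing R]
    [Ring.KrullDimLE 1 R] [AddCommGroup M] [Module R M] [Module.Finite R M]
    (h : IsCentrallyEndoAIP R M) :
    (∀ (r : R) (m : M), r ≠ 0 → r • m = 0 → m = 0) ∨ IsSemisimpleModule R M := by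
  refine h.torsion_eq_bot_or_isTorsion.imp (fun hM r m hr hrm ↦ ?_) fun hM ↦ ?_
  · have : IsTorsionFree R M := isTorsionFree_iff_torsion_eq_bot.mpr hM
    exact (smul_eq_zero_iff_right hr).mp hrm
  · have := isArtinianRing_quotient_annihilator_of_isTorsion hM
    exact h.isSemisimpleModule_of_isArtinianRing_quotient_annihilator

/-- Every finitely generated centrally endo-AIP ℤ-module is torsion-free
or semisimple. -/
theorem stmt_7 (M : Type*) [AddCommGroup M] [Module ℤ M] [Module.Finite ℤ M]
    (h : IsCentrallyEndoAIP ℤ M) :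
    (∀ (n : ℤ) (m : M), n ≠ 0 → n • m = 0 → m = 0) ∨ IsSemisimpleModule ℤ M := by
  exact (stmt_7_general h).imp_left fun hM n m hn hnm ↦
    hM n m hn ((int_smul_eq_zsmul ‹Module ℤ M› n m).trans hnm)
end

section
/- For every prime number p, the ℤ-module M = ℤ ⊕ ℤ/pℤ is not a centrally endo-AIP module. -/
/-!
If `N` is a fully invariant submodule of a centrally endo-AIP module `M`, then an endomorphism `φ`
that kills `N` and has its image in `N` is zero: for a central `ψ` killing `N` with `φ * ψ = φ`,
we get `φ = φ * ψ = ψ * φ = 0`. In `A × N` with `Hom(N, A) = 0`, the summand `N` is fully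
invariant, and every `A → N` yields such a `φ`, so `Hom(A, N) = 0` as well. But
`Hom(ℤ/pℤ, ℤ) = 0` while `Hom(ℤ, ℤ/pℤ) ≠ 0`.
-/

theorem IsCentrallyEndoAIP.eq_zero_of_le_ker_of_range_le {R M : Type*} [Ring R] [AddCommGroup M]
    [Module R M] (h : IsCentrallyEndoAIP R M) {N : Submodule R M} (hN : IsFullyInvariant N)
    {φ : Module.End R M} (hker : N ≤ LinearMap.ker φ) (hrange : LinearMap.range φ ≤ N) :
    φ = 0 := by
  obtain ⟨ψ, hψ, hcentral, hφψ⟩ := h N hN φ hker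
  calc
    φ = φ * ψ := hφψ.symm
    _ = ψ * φ := (hcentral φ).symm
    _ = 0 := LinearMap.ext fun m ↦ hψ _ (hrange (LinearMap.mem_range_self φ m))

section Prod

variable {R A N : Type*} [Ring R] [AddCommGroup A] [Module R A] [AddCommGroup N] [Module R N]

theorem isFullyInvariant_range_inr [Subsingleton (N →ₗ[R] A)] :
    IsFullyInvariant (LinearMap.range (LinearMap.inr R A N)) := by
  rintro φ _ ⟨n, rfl⟩
  have hzero : LinearMap.fst R A N ∘ₗ φ ∘ₗ LinearMap.inr R A N = 0 := Subsingleton.elim _ _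
  rw [LinearMap.range_inr]
  exact LinearMap.congr_fun hzero n

theorem IsCentrallyEndoAIP.subsingleton_linearMap [Subsingleton (N →ₗ[R] A)]
    (h : IsCentrallyEndoAIP R (A × N)) : Subsingleton (A →ₗ[R] N) := by
  refine subsingleton_of_forall_eq 0 fun f ↦ ?_
  let φ : Module.End R (A × N) := LinearMap.inr R A N ∘ₗ f ∘ₗ LinearMap.fst R A N
  have hker : LinearMap.range (LinearMap.inr R A N) ≤ LinearMap.ker φ := by
    rintro _ ⟨n, rfl⟩
    simp [φ]
  have hφ : φ = 0 :=
    h.eq_zero_of_le_ker_of_range_le isFullyInvariant_range_inr hker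
      (LinearMap.range_comp_le_range _ _)
  ext a
  exact congrArg Prod.snd (LinearMap.congr_fun hφ (a, 0))

variable (R A N) in
theorem stmt_8_general [Subsingleton (N →ₗ[R] A)] [Nontrivial (A →ₗ[R] N)] :
    ¬ IsCentrallyEndoAIP R (A × N) :=
  fun h ↦ not_subsingleton (A →ₗ[R] N) h.subsingleton_linearMap

end Prod

instance subsingleton_linearMap_zmod (n : ℕ) [NeZero n] (A : Type*) [AddCommGroup A]
    [IsAddTorsionFree A] : Subsingleton (ZMod n →ₗ[ℤ] A) := by
  have hreg : IsSMulRegular A (n : ℤ) := .of_ne_zero (NeZero.ne _)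
  have hann : (n : ℤ) ∈ Module.annihilator ℤ (ZMod n) :=
    Module.mem_annihilator.mpr fun x ↦ by simp
  exact hreg.linearMap_subsingleton_of_mem_annihilator hann

instance nontrivial_linearMap_ring (R M : Type*) [Semiring R] [AddCommMonoid M] [Module R M]
    [Nontrivial M] : Nontrivial (R →ₗ[R] M) :=
  (LinearMap.ringLmapEquivSelf R ℕ M).nontrivial

/-- For every prime `p`, the ℤ-module `ℤ ⊕ ℤ/pℤ` is not centrally endo-AIP. -/
theorem stmt_8 (p : ℕ) (hp : p.Prime) : ¬ IsCentrallyEndoAIP ℤ (ℤ × ZMod p) := by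
  have : Fact p.Prime := ⟨hp⟩
  exact stmt_8_general ℤ ℤ (ZMod p)
end

section
/- If R is a centrally AIP ring, then for every positive integer n the n × n full matrix ring M_n(R) is a centrally AIP ring. -/
/-!
`Mₙ` commutes with taking left annihilators, and every two-sided ideal of `Mₙ(R)` is `Mₙ(J)` for
some two-sided ideal `J` of `R`, so it suffices that `Mₙ` preserves central s-unitality. Given
`A ∈ Mₙ(I)`, its finitely many entries have a common central unit `z ∈ I`, obtained by combining
units for the individual entries through `1 - z = (1 - z₁) ⋯ (1 - zₖ)`; then the scalar matrix of
`z` is a central unit for `A` lying in `Mₙ(I)`.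
-/

/-- A left ideal `I` of `S` is *centrally s-unital* if every `a ∈ I` satisfies `a * z = a` for some
`z ∈ I` that is central in `S`. Being two-sided is not part of the definition, so that it applies
to Mathlib's left annihilators, which are bundled as left ideals. -/
def IsCentrallySUnital {S : Type*} [Ring S] (I : Ideal S) : Prop :=
  ∀ a ∈ I, ∃ z ∈ I, z ∈ Subring.center S ∧ a * z = a

theorem isCentrallyAIPRing_iff_isCentrallySUnital_annihilator {S : Type*} [Ring S] :
    IsCentrallyAIPRing S ↔ ∀ I : TwoSidedIdeal S, IsCentrallySUnital I.asIdeal.annihilator := by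
  have mem_center (z : S) : z ∈ Subring.center S ↔ ∀ s, z * s = s * z :=
    Subring.mem_center_iff.trans (forall_congr' fun _ ↦ eq_comm)
  simp only [IsCentrallyAIPRing, IsCentrallySUnital, Submodule.mem_annihilator,
    TwoSidedIdeal.mem_asIdeal, smul_eq_mul, mem_center]

theorem annihilator_ideal_matrix {R n : Type*} [Semiring R] [Fintype n] [DecidableEq n]
    (J : Ideal R) : (J.matrix n).annihilator = J.annihilator.matrix n := by
  ext A
  simp only [Ideal.mem_matrix, Submodule.mem_annihilator, smul_eq_mul]
  constructor
  · intro hA i j x hx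
    have hsingle : ∀ k l, Matrix.single j j x k l ∈ J := fun k l ↦ by
      rw [Matrix.single_apply]
      split_ifs
      exacts [hx, J.zero_mem]
    simpa using congrFun₂ (hA _ hsingle) i j
  · intro hA M hM
    ext i j
    exact Finset.sum_eq_zero fun k _ ↦ hA i k (M k j) (hM k j)

namespace IsCentrallySUnital

theorem exists_common_unit {S : Type*} [Ring S] {I : Ideal S} (hI : IsCentrallySUnital I)
    {s : Set S} (hs : s.Finite) (hsI : s ⊆ I) :
    ∃ z ∈ I, z ∈ Subring.center S ∧ ∀ a ∈ s, a * z = a := by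
  induction s, hs using Set.Finite.induction_on with
  | empty => exact ⟨0, I.zero_mem, zero_mem _, by simp⟩
  | @insert a s _ _ ih =>
    obtain ⟨haI, hsI⟩ := Set.insert_subset_iff.mp hsI
    obtain ⟨z, hzI, hz, hsz⟩ := ih hsI
    obtain ⟨w, hwI, hw, haw⟩ := hI a haI
    refine ⟨z + w - z * w, sub_mem (add_mem hzI hwI) (I.mul_mem_left z hwI),
      sub_mem (add_mem hz hw) (mul_mem hz hw), Set.forall_mem_insert.mpr ⟨?_, fun b hb ↦ ?_⟩⟩
    · have hazw : a * (z * w) = a * z := by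
        rw [← Subring.mem_center_iff.mp hz w, ← mul_assoc, haw]
      rw [mul_sub, mul_add, hazw, haw, add_sub_cancel_left]
    · rw [mul_sub, mul_add, ← mul_assoc, hsz b hb, add_sub_cancel_right]

protected theorem matrix {R n : Type*} [Ring R] [Fintype n] [DecidableEq n] {I : Ideal R}
    (hI : IsCentrallySUnital I) : IsCentrallySUnital (I.matrix n) := by
  intro A hA
  have hentries : Set.range (fun p : n × n ↦ A p.1 p.2) ⊆ I :=
    Set.range_subset_iff.mpr fun p ↦ hA p.1 p.2
  obtain ⟨z, hzI, hz, hAz⟩ := hI.exists_common_unit (Set.finite_range _) hentries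
  refine ⟨Matrix.scalar n z, fun i j ↦ ?_, ?_, ?_⟩
  · rw [Matrix.scalar_apply, Matrix.diagonal_apply]
    split_ifs
    exacts [hzI, I.zero_mem]
  · rw [Matrix.subringCenter_eq_scalar_map]
    exact Subring.mem_map.mpr ⟨z, hz, rfl⟩
  · ext i j
    rw [Matrix.scalar_apply, Matrix.mul_diagonal]
    exact hAz _ ⟨(i, j), rfl⟩

end IsCentrallySUnital

theorem stmt_13_general {R n : Type*} [Ring R] [Fintype n] [DecidableEq n]
    (h : IsCentrallyAIPRing R) : IsCentrallyAIPRing (Matrix n n R) := by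
  rw [isCentrallyAIPRing_iff_isCentrallySUnital_annihilator] at h ⊢
  intro I
  cases isEmpty_or_nonempty n
  · exact fun _ _ ↦ ⟨0, zero_mem _, zero_mem _, Subsingleton.elim _ _⟩
  · obtain ⟨J, rfl⟩ := TwoSidedIdeal.equivMatrix.surjective I
    rw [TwoSidedIdeal.equivMatrix_apply, TwoSidedIdeal.asIdeal_matrix, annihilator_ideal_matrix]
    exact (h J).matrix

/-- Matrix rings over a centrally AIP ring are centrally AIP. -/
theorem stmt_13 (R : Type*) [Ring R] (h : IsCentrallyAIPRing R) (n : ℕ) (hn : 0 < n) :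
    IsCentrallyAIPRing (Matrix (Fin n) (Fin n) R) :=
  stmt_13_general h
end

section
/- The endomorphism ring of a centrally endo-AIP module is a centrally AIP ring. That is, if M is a centrally endo-AIP right R-module, then S = End_R(M) is a centrally AIP ring. -/
/-- The sum of the ranges of a set `X` of linear maps. For a left ideal `I` of `End_R(M)` it is
the submodule `I M`, through which left annihilators of ideals become those of submodules. -/
def sumRange {R M N : Type*} [Semiring R] [AddCommMonoid M] [AddCommMonoid N]
    [Module R M] [Module R N] (X : Set (M →ₗ[R] N)) : Submodule R N :=
  ⨆ f ∈ X, LinearMap.range f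

section SumRange

variable {R M N P : Type*} [Semiring R] [AddCommMonoid M] [AddCommMonoid N] [AddCommMonoid P]
  [Module R M] [Module R N] [Module R P] {X : Set (M →ₗ[R] N)}

theorem sumRange_le_iff {p : Submodule R N} :
    sumRange X ≤ p ↔ ∀ f ∈ X, LinearMap.range f ≤ p :=
  iSup₂_le_iff

theorem range_le_sumRange {f : M →ₗ[R] N} (hf : f ∈ X) : LinearMap.range f ≤ sumRange X :=
  sumRange_le_iff.1 le_rfl f hf

theorem sumRange_le_ker_iff {g : N →ₗ[R] P} :
    sumRange X ≤ LinearMap.ker g ↔ ∀ f ∈ X, g ∘ₗ f = 0 := by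
  simp only [sumRange_le_iff, LinearMap.range_le_ker_iff]

end SumRange

theorem isFullyInvariant_sumRange {R M : Type*} [Ring R] [AddCommGroup M] [Module R M]
    (I : Ideal (Module.End R M)) : IsFullyInvariant (sumRange (I : Set (M →ₗ[R] M))) := by
  intro φ
  suffices sumRange (I : Set (M →ₗ[R] M)) ≤ (sumRange (I : Set (M →ₗ[R] M))).comap φ from this
  refine sumRange_le_iff.2 fun f hf => ?_
  rw [← Submodule.map_le_iff_le_comap, ← LinearMap.range_comp]
  exact range_le_sumRange (I.mul_mem_left φ hf)

theorem stmt_14_general {R M : Type*} [Ring R] [AddCommGroup M] [Module R M]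
    (h : IsCentrallyEndoAIP R M) (I : Ideal (Module.End R M)) (a : Module.End R M)
    (ha : ∀ x ∈ I, a * x = 0) :
    ∃ z : Module.End R M, (∀ x ∈ I, z * x = 0) ∧
      (∀ s : Module.End R M, z * s = s * z) ∧ a * z = a := by
  obtain ⟨z, hz, hcomm, haz⟩ :=
    h _ (isFullyInvariant_sumRange I) a (sumRange_le_ker_iff.2 ha)
  exact ⟨z, sumRange_le_ker_iff.1 hz, hcomm, haz⟩

/-- The endomorphism ring of a centrally endo-AIP module is a
centrally AIP ring. -/
theorem stmt_14 (R M : Type*) [Ring R] [AddCommGroup M] [Module R M]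
    (h : IsCentrallyEndoAIP R M) : IsCentrallyAIPRing (Module.End R M) := by
  intro I
  simpa only [TwoSidedIdeal.mem_asIdeal] using stmt_14_general h I.asIdeal
end
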